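/- arXiv:2408.04903 — 7 statements merged into one kernel-verified Lean document; each statement's English description precedes it below -/
import Mathlib

section
/- If an explainer L satisfies Success, Feasibility and Coherence, then L satisfies Validity. -/
/-- A classification theory: a finite set of features, a finite domain (with at
least two values) for each feature, and a finite set of at least two classes. -/
structure CTheory where
  F : Finset ℕ
  dom : ℕ → Finset ℕ
  dom_nontrivial : ∀ f ∈ F, 1 < (dom f).card
  C : Finset ℕ
  C_nontrivial : 2 ≤ C.card

/-- A literal of a theory is a pair (feature, value) with the value in the
feature's domain. -/
def IsLiteral (T : CTheory) (l : ℕ × ℕ) : Prop :=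
  l.1 ∈ T.F ∧ l.2 ∈ T.dom l.1

/-- A set of literals is consistent iff no feature gets two distinct values. -/
def ConsistentLits (S : Set (ℕ × ℕ)) : Prop :=
  ∀ l ∈ S, ∀ l' ∈ S, l.1 = l'.1 → l.2 = l'.2

/-- A partial assignment: a consistent set of literals (each feature occurs at
most once). -/
def IsPartialAssignment (T : CTheory) (E : Set (ℕ × ℕ)) : Prop :=
  (∀ l ∈ E, IsLiteral T l) ∧ ConsistentLits E

/-- An instance: a partial assignment in which every feature occurs (exactly) once. -/
def IsInstance (T : CTheory) (x : Set (ℕ × ℕ)) : Prop :=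
  IsPartialAssignment T x ∧ ∀ f ∈ T.F, ∃ v, (f, v) ∈ x

/-- The feature space of a theory: the set of all its instances. -/
def FeatureSpace (T : CTheory) : Set (Set (ℕ × ℕ)) := {x | IsInstance T x}

/-- A classifier maps every instance to a class. -/
def IsClassifier (T : CTheory) (κ : Set (ℕ × ℕ) → ℕ) : Prop :=
  ∀ x ∈ FeatureSpace T, κ x ∈ T.C

/-- A question (T, κ, D, x): κ is a classifier on T, D ⊆ F(T) and x ∈ D. -/
def IsQuestion (T : CTheory) (κ : Set (ℕ × ℕ) → ℕ)
    (D : Set (Set (ℕ × ℕ))) (x : Set (ℕ × ℕ)) : Prop :=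
  IsClassifier T κ ∧ D ⊆ FeatureSpace T ∧ x ∈ D

/-- An explainer maps every question (T, κ, D, x) to a set of sets of literals. -/
abbrev Explainer :=
  CTheory → (Set (ℕ × ℕ) → ℕ) → Set (Set (ℕ × ℕ)) → Set (ℕ × ℕ) → Set (Set (ℕ × ℕ))

/-- An explainer returns, on every question over T, a subset of E(T)
(the partial assignments of T). -/
def IsExplainer (L : Explainer) : Prop :=
  ∀ T κ D x, IsQuestion T κ D x → ∀ E ∈ L T κ D x, IsPartialAssignment T E

/-- Feasibility: every explanation is part of the instance being explained. -/
def Feasibility (L : Explainer) : Prop :=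
  ∀ T κ D x, IsQuestion T κ D x → ∀ E ∈ L T κ D x, E ⊆ x

/-- Validity: no explanation is contradicted within the dataset. -/
def Validity (L : Explainer) : Prop :=
  ∀ T κ D x, IsQuestion T κ D x → ∀ E ∈ L T κ D x,
    ¬ ∃ y ∈ D, E ⊆ y ∧ κ y ≠ κ x

/-- Success: every question receives at least one explanation. -/
def Success (L : Explainer) : Prop :=
  ∀ T κ D x, IsQuestion T κ D x → (L T κ D x).Nonempty

/-- Coherence: explanations of instances with distinct classes are jointly
inconsistent. -/
def Coherence (L : Explainer) : Prop :=
  ∀ T κ D x x', IsQuestion T κ D x → IsQuestion T κ D x' → κ x ≠ κ x' →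
    ∀ E ∈ L T κ D x, ∀ E' ∈ L T κ D x', ¬ ConsistentLits (E ∪ E')

/-- Irreducibility: no literal of an explanation can be removed
(witnessed in the dataset). -/
def Irreducibility (L : Explainer) : Prop :=
  ∀ T κ D x, IsQuestion T κ D x → ∀ E ∈ L T κ D x, ∀ l ∈ E,
    ∃ x' ∈ D, κ x' ≠ κ x ∧ E \ {l} ⊆ x'

/-- Strong Irreducibility: no literal of an explanation can be removed
(witnessed in the feature space). -/
def StrongIrreducibility (L : Explainer) : Prop :=
  ∀ T κ D x, IsQuestion T κ D x → ∀ E ∈ L T κ D x, ∀ l ∈ E,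
    ∃ x' ∈ FeatureSpace T, κ x' ≠ κ x ∧ E \ {l} ⊆ x'

/-- Completeness: every omitted candidate is invalidated within the dataset. -/
def Completeness (L : Explainer) : Prop :=
  ∀ T κ D x, IsQuestion T κ D x → ∀ E ⊆ x, E ∉ L T κ D x →
    ∃ y ∈ D, E ⊆ y ∧ κ y ≠ κ x

/-- Strong Completeness: every omitted candidate is invalidated within the
feature space. -/
def StrongCompleteness (L : Explainer) : Prop :=
  ∀ T κ D x, IsQuestion T κ D x → ∀ E ⊆ x, E ∉ L T κ D x →
    ∃ y ∈ FeatureSpace T, E ⊆ y ∧ κ y ≠ κ x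

/-- Monotonicity: enlarging the dataset preserves explanations. -/
def Monotonicity (L : Explainer) : Prop :=
  ∀ T κ D D' x, IsQuestion T κ D x → IsQuestion T κ D' x → D ⊆ D' →
    L T κ D x ⊆ L T κ D' x

/-- Counter-Monotonicity: enlarging the dataset can only discard explanations. -/
def CounterMonotonicity (L : Explainer) : Prop :=
  ∀ T κ D D' x, IsQuestion T κ D x → IsQuestion T κ D' x → D ⊆ D' →
    L T κ D' x ⊆ L T κ D x

/-- The explainer L_dw returning all weak abductive explanations (dwAXp's):
E ⊆ x and every y ∈ D containing E has the same class as x. -/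
def Ldw : Explainer := fun _T κ D x =>
  {E | E ⊆ x ∧ ∀ y ∈ D, E ⊆ y → κ y = κ x}

/-- The explainer L_w returning the weak abductive explanations computed on the
whole feature space. -/
def Lw : Explainer := fun T κ _D x => Ldw T κ (FeatureSpace T) x

/-- The explainer L_dc returning the subset-minimal weak abductive explanations
(concise abductive explanations). -/
def Ldc : Explainer := fun T κ D x =>
  {E | E ∈ Ldw T κ D x ∧ ∀ E' ∈ Ldw T κ D x, E' ⊆ E → E' = E}

/-- A set X of partial assignments is coherent under (D, κ): no two of its
members are consistent together while being contained in instances of D with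
distinct classes. -/
def CoherentSet (κ : Set (ℕ × ℕ) → ℕ) (D : Set (Set (ℕ × ℕ)))
    (X : Set (Set (ℕ × ℕ))) : Prop :=
  ¬ ∃ E ∈ X, ∃ E' ∈ X, ConsistentLits (E ∪ E') ∧
      ∃ y ∈ D, ∃ z ∈ D, E ⊆ y ∧ E' ⊆ z ∧ κ y ≠ κ z

/-- An envelope under (D, κ): a coherent set of dwAXp's covering every instance
of D. -/
def IsEnvelope (T : CTheory) (κ : Set (ℕ × ℕ) → ℕ) (D : Set (Set (ℕ × ℕ)))
    (X : Set (Set (ℕ × ℕ))) : Prop :=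
  (∀ E ∈ X, IsPartialAssignment T E) ∧
  CoherentSet κ D X ∧
  (∀ E ∈ X, ∃ x ∈ D, E ∈ Ldw T κ D x) ∧
  (∀ x ∈ D, ∃ E ∈ X, E ⊆ x)

/-- W: the union of all dwAXp's of all instances of the dataset. -/
def dwUnion (T : CTheory) (κ : Set (ℕ × ℕ) → ℕ) (D : Set (Set (ℕ × ℕ))) :
    Set (Set (ℕ × ℕ)) :=
  {E | ∃ x ∈ D, E ∈ Ldw T κ D x}

/-- The two defining conditions of an irrefutable envelope (before maximality):
a set of dwAXp's none of which conflicts with any dwAXp. -/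
def IrrCandidate (T : CTheory) (κ : Set (ℕ × ℕ) → ℕ) (D : Set (Set (ℕ × ℕ)))
    (X : Set (Set (ℕ × ℕ))) : Prop :=
  X ⊆ dwUnion T κ D ∧
  ∀ E ∈ X, ¬ ∃ E' ∈ dwUnion T κ D, ¬ CoherentSet κ D {E, E'}

/-- An irrefutable envelope under (D, κ): a subset-maximal set of mutually
irrefutable dwAXp's. -/
def IsIrrefutableEnvelope (T : CTheory) (κ : Set (ℕ × ℕ) → ℕ)
    (D : Set (Set (ℕ × ℕ))) (X : Set (Set (ℕ × ℕ))) : Prop :=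
  IrrCandidate T κ D X ∧ ∀ X', IrrCandidate T κ D X' → ¬ X ⊂ X'

/-- A coherent explainer: on every question, it returns the members of a fixed
envelope (the union of its outputs over the dataset) included in the instance. -/
def IsCoherentExplainer (L : Explainer) : Prop :=
  ∀ T κ D x, IsQuestion T κ D x →
    L T κ D x = {E | (∃ z ∈ D, E ∈ L T κ D z) ∧ E ⊆ x} ∧
    IsEnvelope T κ D {E | ∃ z ∈ D, E ∈ L T κ D z}

theorem success_feasibility_coherence_imply_validity (L : Explainer) (hL : IsExplainer L)
    (hSuc : Success L) (hFea : Feasibility L) (hCoh : Coherence L) : Validity L := by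
  rintro T κ D x hQ E hE ⟨y, hy, hEy, hne⟩
  have hQy : IsQuestion T κ D y := ⟨hQ.1, hQ.2.1, hy⟩
  obtain ⟨E', hE'⟩ := hSuc T κ D y hQy
  have hsub : E ∪ E' ⊆ y := Set.union_subset hEy (hFea T κ D y hQy E' hE')
  have hcons : ConsistentLits y := (hQ.2.1 hy).1.2
  exact hCoh T κ D x y hQ hQy (Ne.symm hne) E hE E' hE'
    (fun l hl l' hl' => hcons l (hsub hl) l' (hsub hl'))
end

section
/- The explainer L_dw satisfies Feasibility, Validity, Success, Completeness, Strong Completeness and Counter-Monotonicity, and it violates Coherence, Irreducibility, Strong Irreducibility and Monotonicity. -/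
def exT : CTheory where
  F := {0, 1}
  dom := fun _ => {0, 1}
  dom_nontrivial := by intro f _; decide
  C := {0, 1}
  C_nontrivial := by decide

def exX (a : ℕ) : Set (ℕ × ℕ) := {(0, a), (1, a)}

lemma exX_mem (a : ℕ) (ha : a = 0 ∨ a = 1) : exX a ∈ FeatureSpace exT := by
  refine ⟨⟨?_, ?_⟩, ?_⟩
  · rintro l (rfl | rfl) <;> simp [IsLiteral, exT, ha]
  · rintro l (rfl | rfl) l' (rfl | rfl) <;> simp
  · intro f hf
    refine ⟨a, ?_⟩
    simp [exT] at hf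
    simpa [exX] using hf

open Classical in
noncomputable def exK (z : Set (ℕ × ℕ)) : ℕ := if (0, 0) ∈ z then 0 else 1

lemma exK_cl : IsClassifier exT exK := by
  intro x _
  unfold exK
  split_ifs <;> simp [exT]

lemma exK0 : exK (exX 0) = 0 := by simp [exK, exX]
lemma exK1 : exK (exX 1) = 1 := by simp [exK, exX]

lemma exD : ({exX 0, exX 1} : Set (Set (ℕ × ℕ))) ⊆ FeatureSpace exT := by
  rintro _ (rfl | rfl)
  · exact exX_mem 0 (Or.inl rfl)
  · exact exX_mem 1 (Or.inr rfl)

lemma exD0 : ({exX 0} : Set (Set (ℕ × ℕ))) ⊆ FeatureSpace exT := by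
  rintro _ rfl
  exact exX_mem 0 (Or.inl rfl)

lemma ex_const : IsQuestion exT (fun _ => 0) {exX 0} (exX 0) :=
  ⟨fun _ _ => by simp [exT], exD0, rfl⟩

theorem Ldw_axioms :
    Feasibility Ldw ∧ Validity Ldw ∧ Success Ldw ∧ Completeness Ldw ∧
    StrongCompleteness Ldw ∧ CounterMonotonicity Ldw ∧
    ¬ Coherence Ldw ∧ ¬ Irreducibility Ldw ∧ ¬ StrongIrreducibility Ldw ∧
    ¬ Monotonicity Ldw := by
  refine ⟨?_, ?_, ?_, ?_, ?_, ?_, ?_, ?_, ?_, ?_⟩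
  · intro T κ D x _ E hE
    exact hE.1
  · rintro T κ D x _ E hE ⟨y, hy, h1, h2⟩
    exact h2 (hE.2 y hy h1)
  · rintro T κ D x ⟨_, hD, hx⟩
    refine ⟨x, subset_rfl, fun y hy hxy => ?_⟩
    congr 1
    refine Set.Subset.antisymm ?_ hxy
    rintro ⟨f, v⟩ hl
    obtain ⟨w, hw⟩ := (hD hx).2 f ((hD hy).1.1 _ hl).1
    have hvw : v = w := (hD hy).1.2 _ hl _ (hxy hw) rfl
    exact hvw ▸ hw
  · intro T κ D x _ E hE hn
    by_contra hc
    push Not at hc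
    exact hn ⟨hE, hc⟩
  · intro T κ D x hQ E hE hn
    by_contra hc
    push Not at hc
    exact hn ⟨hE, fun y hy => hc y (hQ.2.1 hy)⟩
  · intro T κ D D' x _ _ h E hE
    exact ⟨hE.1, fun y hy => hE.2 y (h hy)⟩
  · intro h
    refine h exT exK {exX 0, exX 1} (exX 0) (exX 1) ⟨exK_cl, exD, by simp⟩
      ⟨exK_cl, exD, by simp⟩ (by simp [exK0, exK1]) {(0, 0)} ⟨by simp [exX], ?_⟩
      {(1, 1)} ⟨by simp [exX], ?_⟩ ?_
    · rintro _ (rfl | rfl) h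
      · rfl
      · simp [exX] at h
    · rintro _ (rfl | rfl) h
      · simp [exX] at h
      · rfl
    · rintro l (rfl | rfl) l' (rfl | rfl) <;> simp
  · intro h
    obtain ⟨_, _, h, _⟩ := h exT _ _ _ ex_const (exX 0) ⟨subset_rfl, fun _ _ _ => rfl⟩ (0, 0)
      (by simp [exX])
    exact h rfl
  · intro h
    obtain ⟨_, _, h, _⟩ := h exT _ _ _ ex_const (exX 0) ⟨subset_rfl, fun _ _ _ => rfl⟩ (0, 0)
      (by simp [exX])
    exact h rfl
  · intro h
    have h1 : (∅ : Set (ℕ × ℕ)) ∈ Ldw exT exK {exX 0} (exX 0) :=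
      ⟨by simp, by rintro _ rfl _; rfl⟩
    have h2 := (h exT exK {exX 0} {exX 0, exX 1} (exX 0) ⟨exK_cl, exD0, rfl⟩
      ⟨exK_cl, exD, by simp⟩ (by simp) h1).2 (exX 1) (by simp) (by simp)
    rw [exK0, exK1] at h2
    exact absurd h2 (by decide)
end

section
/- An explainer L satisfies Feasibility, Validity, Monotonicity and Strong Completeness if and only if L = L_w, i.e. for every question Q = (T, κ, D, x), L(Q) = L_w(Q). -/
theorem feasibility_validity_monotonicity_strongCompleteness_iff_eq_Lw
    (L : Explainer) (hL : IsExplainer L) :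
    (Feasibility L ∧ Validity L ∧ Monotonicity L ∧ StrongCompleteness L) ↔
      ∀ T κ D x, IsQuestion T κ D x → L T κ D x = Lw T κ D x := by
  constructor
  · rintro ⟨hF, hV, hM, hS⟩ T κ D x hQ
    have hQ' : IsQuestion T κ (FeatureSpace T) x := ⟨hQ.1, subset_rfl, hQ.2.1 hQ.2.2⟩
    ext E
    constructor
    · intro hE
      refine ⟨hF T κ D x hQ E hE, fun y hy hEy => ?_⟩
      by_contra hne
      exact hV T κ _ x hQ' E (hM T κ D _ x hQ hQ' hQ.2.1 hE) ⟨y, hy, hEy, hne⟩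
    · rintro ⟨hEx, hE⟩
      by_contra hn
      obtain ⟨y, hy, hEy, hne⟩ := hS T κ D x hQ E hEx hn
      exact hne (hE y hy hEy)
  · intro h
    refine ⟨?_, ?_, ?_, ?_⟩
    · intro T κ D x hQ E hE
      rw [h T κ D x hQ] at hE
      exact hE.1
    · rintro T κ D x hQ E hE ⟨y, hy, hEy, hne⟩
      rw [h T κ D x hQ] at hE
      exact hne (hE.2 y (hQ.2.1 hy) hEy)
    · intro T κ D D' x hQ hQ' _
      rw [h T κ D x hQ, h T κ D' x hQ']
      exact subset_rfl
    · intro T κ D x hQ E hEx hn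
      rw [h T κ D x hQ] at hn
      by_contra hc
      refine hn ⟨hEx, fun y hy hEy => ?_⟩
      by_contra hne
      exact hc ⟨y, hy, hEy, hne⟩
end

section
/- The explainer L_dc satisfies Feasibility, Validity, Success, Irreducibility and Strong Irreducibility, and it violates Coherence, Completeness, Strong Completeness, Monotonicity and Counter-Monotonicity. -/
open Classical in
noncomputable def exκ (x : Set (ℕ × ℕ)) : ℕ := if ((0, 0) : ℕ × ℕ) ∈ x then 0 else 1

def exI (a : ℕ) : Set (ℕ × ℕ) := {(0, a), (1, a)}

theorem exI_inst (a : ℕ) (ha : a = 0 ∨ a = 1) : exI a ∈ FeatureSpace exT := by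
  refine ⟨⟨?_, ?_⟩, ?_⟩
  · rintro l (rfl | rfl) <;> simp [IsLiteral, exT, ha]
  · rintro l (rfl | rfl) l' (rfl | rfl) h <;> rfl
  · intro f hf
    exact ⟨a, by simpa [exI, exT] using hf⟩

theorem exκ_cl : IsClassifier exT exκ := by
  intro x _
  unfold exκ
  split_ifs <;> simp [exT]

theorem exκ0 : exκ (exI 0) = 0 := by simp [exκ, exI]
theorem exκ1 : exκ (exI 1) = 1 := by simp [exκ, exI]

theorem exQ1 : IsQuestion exT exκ {exI 0} (exI 0) :=
  ⟨exκ_cl, by rintro y rfl; exact exI_inst 0 (Or.inl rfl), rfl⟩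

theorem exQ2 (a : ℕ) (ha : a = 0 ∨ a = 1) : IsQuestion exT exκ {exI 0, exI 1} (exI a) :=
  ⟨exκ_cl, by
    rintro y (rfl | rfl)
    · exact exI_inst 0 (Or.inl rfl)
    · exact exI_inst 1 (Or.inr rfl), by rcases ha with rfl | rfl <;> simp⟩

theorem ex_empty : (∅ : Set (ℕ × ℕ)) ∈ Ldw exT exκ {exI 0} (exI 0) :=
  ⟨Set.empty_subset _, by rintro y rfl _; rfl⟩

theorem ex_not : ({(0, 0)} : Set (ℕ × ℕ)) ∉ Ldc exT exκ {exI 0} (exI 0) := by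
  intro h
  have := h.2 ∅ ex_empty (Set.empty_subset _)
  exact (Set.singleton_ne_empty _) this.symm

theorem ex_min (E : Set (ℕ × ℕ)) (l : ℕ × ℕ) (a : ℕ) (ha : a = 0 ∨ a = 1)
    (hE : E ∈ Ldw exT exκ {exI 0, exI 1} (exI a)) (h : E ⊆ {l}) : E = {l} := by
  rcases Set.subset_singleton_iff_eq.1 h with rfl | h
  · have h0 := hE.2 (exI 0) (by simp) (Set.empty_subset _)
    have h1 := hE.2 (exI 1) (by simp) (Set.empty_subset _)
    rw [← h1, exκ0, exκ1] at h0
    exact absurd h0 (by norm_num)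
  · exact h

theorem ex_in0 : ({(0, 0)} : Set (ℕ × ℕ)) ∈ Ldc exT exκ {exI 0, exI 1} (exI 0) := by
  refine ⟨⟨by simp [exI], ?_⟩, fun E' hE' h => ex_min E' _ 0 (Or.inl rfl) hE' h⟩
  rintro y (rfl | rfl) h
  · rfl
  · simp [exI] at h

theorem ex_in1 : ({(1, 1)} : Set (ℕ × ℕ)) ∈ Ldc exT exκ {exI 0, exI 1} (exI 1) := by
  refine ⟨⟨by simp [exI], ?_⟩, fun E' hE' h => ex_min E' _ 1 (Or.inr rfl) hE' h⟩
  rintro y (rfl | rfl) h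
  · simp [exI] at h
  · rfl

theorem inst_finite (T : CTheory) (x : Set (ℕ × ℕ)) (hx : x ∈ FeatureSpace T) : x.Finite := by
  refine ((T.F ×ˢ T.F.biUnion T.dom).finite_toSet).subset ?_
  intro l hl
  have := hx.1.1 l hl
  simp only [Finset.mem_coe, Finset.mem_product, Finset.mem_biUnion]
  exact ⟨this.1, l.1, this.1, this.2⟩

theorem Ldc_irr : Irreducibility Ldc := by
  intro T κ D x hQ E hE l hl
  by_contra hc
  push Not at hc
  have := hE.2 (E \ {l}) ⟨Set.diff_subset.trans hE.1.1, fun y hy h => by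
    by_contra hne
    exact hc y hy hne h⟩ Set.diff_subset
  rw [← this] at hl
  exact hl.2 rfl

theorem Ldc_succ : Success Ldc := by
  intro T κ D x hQ
  by_contra hne
  have hx := inst_finite T x (hQ.2.1 hQ.2.2)
  have hfin : (Ldw T κ D x).Finite := hx.finite_subsets.subset (fun E hE => hE.1)
  have hnon : (Ldw T κ D x).Nonempty := by
    refine ⟨x, Set.Subset.refl _, fun y hy hxy => ?_⟩
    have hX : IsInstance T x := hQ.2.1 hQ.2.2
    have hY : IsInstance T y := hQ.2.1 hy
    have : y = x := by
      refine Set.Subset.antisymm ?_ hxy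
      rintro ⟨f, v⟩ hl
      obtain ⟨w, hw⟩ := hX.2 f (hY.1.1 _ hl).1
      have hvw : v = w := hY.1.2 _ hl _ (hxy hw) rfl
      rw [hvw]
      exact hw
    rw [this]
  obtain ⟨E, hE⟩ := hfin.exists_minimal hnon
  exact hne ⟨E, hE.prop, fun E' h' hs => Set.Subset.antisymm hs (hE.le_of_le h' hs)⟩

theorem Ldc_axioms :
    Feasibility Ldc ∧ Validity Ldc ∧ Success Ldc ∧ Irreducibility Ldc ∧
    StrongIrreducibility Ldc ∧
    ¬ Coherence Ldc ∧ ¬ Completeness Ldc ∧ ¬ StrongCompleteness Ldc ∧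
    ¬ Monotonicity Ldc ∧ ¬ CounterMonotonicity Ldc := by
  have hx0 : ({(0, 0)} : Set (ℕ × ℕ)) ⊆ exI 0 := by simp [exI]
  have hk : ∀ y : Set (ℕ × ℕ), {(0, 0)} ⊆ y → exκ y = exκ (exI 0) := by
    intro y hy
    rw [exκ0]
    exact if_pos (hy rfl)
  have hD : ({exI 0} : Set (Set (ℕ × ℕ))) ⊆ {exI 0, exI 1} := by
    rintro y rfl
    exact Or.inl rfl
  have q0 := exQ2 0 (Or.inl rfl)
  refine ⟨fun T κ D x _ E hE => hE.1.1, ?_, Ldc_succ, Ldc_irr, ?_, ?_, ?_, ?_, ?_, ?_⟩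
  · rintro T κ D x _ E hE ⟨y, hy, hs, hn⟩
    exact hn (hE.1.2 y hy hs)
  · intro T κ D x hQ E hE l hl
    obtain ⟨y, hy, h⟩ := Ldc_irr T κ D x hQ E hE l hl
    exact ⟨y, hQ.2.1 hy, h⟩
  · intro h
    refine h _ _ _ _ _ q0 (exQ2 1 (Or.inr rfl)) (by simp [exκ0, exκ1]) _ ex_in0 _ ex_in1 ?_
    rintro l (rfl | rfl) l' (rfl | rfl) h <;> simp at h ⊢
  · intro h
    obtain ⟨y, _, hy, hn⟩ := h _ _ _ _ exQ1 _ hx0 ex_not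
    exact hn (hk y hy)
  · intro h
    obtain ⟨y, _, hy, hn⟩ := h _ _ _ _ exQ1 _ hx0 ex_not
    exact hn (hk y hy)
  · intro h
    have := h _ _ _ _ _ exQ1 q0 hD ⟨ex_empty, fun E' _ hs => Set.subset_empty_iff.1 hs⟩
    have h2 := ex_min ∅ (0, 0) 0 (Or.inl rfl) this.1 (Set.empty_subset _)
    exact Set.singleton_ne_empty _ h2.symm
  · intro h
    exact ex_not (h _ _ _ _ _ exQ1 q0 hD ex_in0)
end

section
/- If an explainer L satisfies Feasibility, Success and Coherence, then for every question Q = (T, κ, D, x), L(Q) ⊆ L_dw(Q). -/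
theorem feasibility_success_coherence_imply_subset_Ldw (L : Explainer)
    (hL : IsExplainer L) (hFea : Feasibility L) (hSuc : Success L) (hCoh : Coherence L) :
    ∀ T κ D x, IsQuestion T κ D x → L T κ D x ⊆ Ldw T κ D x := by
  intro T κ D x hQ E hE
  refine ⟨hFea T κ D x hQ E hE, fun y hy hEy => ?_⟩
  by_contra hne
  have hQy : IsQuestion T κ D y := ⟨hQ.1, hQ.2.1, hy⟩
  obtain ⟨E', hE'⟩ := hSuc T κ D y hQy
  have hE'y := hFea T κ D y hQy E' hE'
  have hsub : E ∪ E' ⊆ y := Set.union_subset hEy hE'y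
  exact hCoh T κ D x y hQ hQy (fun h => hne h.symm) E hE E' hE'
    (fun l hl l' hl' h => (hQ.2.1 hy).1.2 l (hsub hl) l' (hsub hl') h)
end

section
/- For any classification theory T, any D ⊆ F(T) and any classifier κ on T: (1) D ⊆ Irr(D,κ); (2) Irr(D,κ) is an envelope under (D,κ), i.e. Irr(D,κ) ∈ Coh(D,κ); and (3) Irr(D,κ) equals the intersection of all subset-maximal envelopes in Coh(D,κ). -/
theorem aux_not_self (T : CTheory) (κ : Set (ℕ × ℕ) → ℕ) (D : Set (Set (ℕ × ℕ)))
    {E y z : Set (ℕ × ℕ)} (hE : E ∈ dwUnion T κ D) (hy : y ∈ D) (hz : z ∈ D)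
    (h1 : E ⊆ y) (h2 : E ⊆ z) : κ y = κ z := by
  obtain ⟨x, _, _, h⟩ := hE
  rw [h y hy h1, h z hz h2]

theorem aux_pair (T : CTheory) (κ : Set (ℕ × ℕ) → ℕ) (D : Set (Set (ℕ × ℕ)))
    {E E' : Set (ℕ × ℕ)} (hE : E ∈ dwUnion T κ D) (hE' : E' ∈ dwUnion T κ D) :
    CoherentSet κ D {E, E'} ↔ ∀ y ∈ D, ∀ z ∈ D, ConsistentLits (E ∪ E') → E ⊆ y → E' ⊆ z →
      κ y = κ z := by
  constructor
  · intro h y hy z hz hc h1 h2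
    by_contra hne
    exact h ⟨E, by simp, E', by simp, hc, y, hy, z, hz, h1, h2, hne⟩
  · rintro h ⟨A, hA, B, hB, hc, y, hy, z, hz, h1, h2, hne⟩
    apply hne
    rcases hA with rfl | rfl <;> rcases hB with rfl | rfl
    · exact aux_not_self T κ D hE hy hz h1 h2
    · exact h y hy z hz hc h1 h2
    · exact (h z hz y hy (by rwa [Set.union_comm]) h2 h1).symm
    · exact aux_not_self T κ D hE' hy hz h1 h2

theorem aux_coh (T : CTheory) (κ : Set (ℕ × ℕ) → ℕ) (D : Set (Set (ℕ × ℕ)))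
    {Y : Set (Set (ℕ × ℕ))} :
    CoherentSet κ D Y ↔ ∀ E ∈ Y, ∀ E' ∈ Y, CoherentSet κ D {E, E'} := by
  constructor
  · rintro h E hE E' hE' ⟨A, hA, B, hB, r⟩
    refine h ⟨A, ?_, B, ?_, r⟩
    · rcases hA with rfl | rfl <;> assumption
    · rcases hB with rfl | rfl <;> assumption
  · rintro h ⟨A, hA, B, hB, r⟩
    exact h A hA B hB ⟨A, by simp, B, by simp, r⟩

theorem aux_max (T : CTheory) (κ : Set (ℕ × ℕ) → ℕ) (D : Set (Set (ℕ × ℕ)))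
    {Y : Set (Set (ℕ × ℕ))} (hY : IsEnvelope T κ D Y) :
    ∃ M, Y ⊆ M ∧ IsEnvelope T κ D M ∧ ∀ Z, IsEnvelope T κ D Z → ¬ M ⊂ Z := by
  obtain ⟨M, hYM, hM⟩ := zorn_subset_nonempty {Z | IsEnvelope T κ D Z} (by
    intro c hc hch hne
    refine ⟨⋃₀ c, ⟨?_, ?_, ?_, ?_⟩, fun s hs => Set.subset_sUnion_of_mem hs⟩
    · rintro E ⟨Z, hZ, hE⟩
      exact (hc hZ).1 E hE
    · rintro ⟨A, ⟨Z, hZ, hA⟩, B, ⟨Z', hZ', hB⟩, r⟩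
      rcases hch.total hZ hZ' with h | h
      · exact (hc hZ').2.1 ⟨A, h hA, B, hB, r⟩
      · exact (hc hZ).2.1 ⟨A, hA, B, h hB, r⟩
    · rintro E ⟨Z, hZ, hE⟩
      exact (hc hZ).2.2.1 E hE
    · intro x hx
      obtain ⟨Z, hZ⟩ := hne
      obtain ⟨E, hE, h⟩ := (hc hZ).2.2.2 x hx
      exact ⟨E, ⟨Z, hZ, hE⟩, h⟩) Y hY
  exact ⟨M, hYM, hM.prop, fun Z hZ h => h.2 (hM.le_of_ge hZ h.1)⟩

theorem irrefutable_envelope_properties (T : CTheory) (κ : Set (ℕ × ℕ) → ℕ)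
    (D : Set (Set (ℕ × ℕ))) (hκ : IsClassifier T κ) (hD : D ⊆ FeatureSpace T)
    (X : Set (Set (ℕ × ℕ))) (hX : IsIrrefutableEnvelope T κ D X) :
    D ⊆ X ∧ IsEnvelope T κ D X ∧
    X = ⋂₀ {Y | IsEnvelope T κ D Y ∧ ∀ Z, IsEnvelope T κ D Z → ¬ Y ⊂ Z} := by
  have hWp : ∀ E ∈ dwUnion T κ D, IsPartialAssignment T E := by
    rintro E ⟨x, hx, h, _⟩
    have hi := (hD hx).1
    exact ⟨fun l hl => hi.1 l (h hl), fun l hl l' hl' => hi.2 l (h hl) l' (h hl')⟩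
  have hfull : ∀ x ∈ D, ∀ E, IsPartialAssignment T E → ConsistentLits (x ∪ E) → E ⊆ x := by
    rintro x hx E hE hc ⟨f, v⟩ hl
    obtain ⟨w, hw⟩ := (hD hx).2 f (hE.1 _ hl).1
    have : w = v := hc (f, w) (Or.inl hw) (f, v) (Or.inr hl) rfl
    exact this ▸ hw
  have hsub : ∀ x ∈ D, ∀ y ∈ D, x ⊆ y → x = y := by
    intro x hx y hy h
    refine h.antisymm (hfull x hx y (hD hy).1 ?_)
    rw [Set.union_eq_self_of_subset_left h]
    exact (hD hy).1.2
  have hDW : ∀ x ∈ D, x ∈ dwUnion T κ D := fun x hx =>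
    ⟨x, hx, subset_rfl, fun y hy h => by rw [hsub x hx y hy h]⟩
  obtain ⟨⟨hXW, hXc⟩, hmax⟩ := hX
  have hXc' : ∀ E ∈ X, ∀ E' ∈ dwUnion T κ D, CoherentSet κ D {E, E'} := by
    intro E hE E' hE'
    by_contra h
    exact hXc E hE ⟨E', hE', h⟩
  have hmem : ∀ E ∈ dwUnion T κ D, (∀ E' ∈ dwUnion T κ D, CoherentSet κ D {E, E'}) → E ∈ X := by
    intro E hE h
    by_contra hn
    refine hmax (insert E X) ⟨?_, ?_⟩ (Set.ssubset_insert hn)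
    · exact Set.insert_subset hE hXW
    · rintro A (rfl | hA) ⟨B, hB, hAB⟩
      · exact hAB (h B hB)
      · exact hAB (hXc' A hA B hB)
  have hDX : D ⊆ X := by
    intro x hx
    refine hmem x (hDW x hx) fun E' hE' => ?_
    rw [aux_pair T κ D (hDW x hx) hE']
    intro y hy z hz hc h1 h2
    rw [← hsub x hx y hy h1]
    exact aux_not_self T κ D hE' hx hz (hfull x hx E' (hWp E' hE') hc) h2
  have hun : ∀ Y ⊆ dwUnion T κ D, CoherentSet κ D Y → IsEnvelope T κ D (X ∪ Y) := by
    intro Y hY hYc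
    have hW : X ∪ Y ⊆ dwUnion T κ D := Set.union_subset hXW hY
    refine ⟨fun E hE => hWp E (hW hE), ?_, fun E hE => hW hE,
      fun x hx => ⟨x, Or.inl (hDX hx), subset_rfl⟩⟩
    rw [aux_coh T]
    rintro A hA B hB
    rcases hA with hA | hA
    · exact hXc' A hA B (hW hB)
    · rcases hB with hB | hB
      · rw [Set.pair_comm]
        exact hXc' B hB A (hY hA)
      · exact (aux_coh T κ D).1 hYc A hA B hB
  have hXe : IsEnvelope T κ D X := by
    have := hun ∅ (by simp) (by rintro ⟨A, hA, _⟩; exact hA)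
    rwa [Set.union_empty] at this
  refine ⟨hDX, hXe, Set.Subset.antisymm ?_ ?_⟩
  · rintro E hE Y ⟨hY, hYm⟩
    by_contra hn
    exact hYm (X ∪ Y) (hun Y hY.2.2.1 hY.2.1)
      ⟨Set.subset_union_right, fun h => hn (h (Or.inl hE))⟩
  · intro E hE
    have hEW : E ∈ dwUnion T κ D := by
      obtain ⟨M, _, hM, hMm⟩ := aux_max T κ D hXe
      exact hM.2.2.1 E (hE M ⟨hM, hMm⟩)
    refine hmem E hEW fun E' hE' => ?_
    have hs : CoherentSet κ D {E'} := by
      rintro ⟨A, rfl, B, rfl, _, y, hy, z, hz, h1, h2, hne⟩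
      exact hne (aux_not_self T κ D hE' hy hz h1 h2)
    obtain ⟨M, hYM, hM, hMm⟩ := aux_max T κ D (hun {E'} (by simpa using hE') hs)
    exact (aux_coh T κ D).1 hM.2.1 E (hE M ⟨hM, hMm⟩) E' (hYM (Or.inr rfl))
end

section
/- For any classification theory T, any D ⊆ F(T), any classifier κ on T and any envelope X under (D,κ), there exists a surrogate function σ_X : F(T) → C such that (1) σ_X(y) = κ(y) for all y ∈ D, and (2) for all x ∈ D and all E ∈ X with E ⊆ x, E is a weak abductive explanation of the question (T, σ_X, F(T), x). -/
theorem surrogate_exists (T : CTheory) (κ : Set (ℕ × ℕ) → ℕ)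
    (hκ : IsClassifier T κ) (D : Set (Set (ℕ × ℕ))) (hD : D ⊆ FeatureSpace T)
    (X : Set (Set (ℕ × ℕ))) (hX : IsEnvelope T κ D X) :
    ∃ σ : Set (ℕ × ℕ) → ℕ, IsClassifier T σ ∧ (∀ y ∈ D, σ y = κ y) ∧
      ∀ x ∈ D, ∀ E ∈ X, E ⊆ x → E ∈ Ldw T σ (FeatureSpace T) x := by
  classical
  obtain ⟨-, hcoh, -, hcov⟩ := hX
  let σ : Set (ℕ × ℕ) → ℕ := fun y =>
    if h : ∃ z, z ∈ D ∧ ∃ E ∈ X, E ⊆ y ∧ E ⊆ z then κ h.choose else κ y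
  have key : ∀ y ∈ FeatureSpace T, ∀ x ∈ D, ∀ E ∈ X, E ⊆ y → E ⊆ x → σ y = κ x := by
    intro y hy x hx E hE hEy hEx
    have h : ∃ z, z ∈ D ∧ ∃ E ∈ X, E ⊆ y ∧ E ⊆ z := ⟨x, hx, E, hE, hEy, hEx⟩
    have hσ : σ y = κ h.choose := dif_pos h
    obtain ⟨hz, E', hE', hE'y, hE'z⟩ := h.choose_spec
    rw [hσ]
    by_contra hne
    refine hcoh ⟨E', hE', E, hE, ?_, h.choose, hz, x, hx, hE'z, hEx, hne⟩
    intro l hl l' hl'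
    exact hy.1.2 l (Set.union_subset hE'y hEy hl) l' (Set.union_subset hE'y hEy hl')
  have hag : ∀ y ∈ D, σ y = κ y := by
    intro y hy
    obtain ⟨E, hE, hEy⟩ := hcov y hy
    exact key y (hD hy) y hy E hE hEy hEy
  refine ⟨σ, ?_, hag, ?_⟩
  · intro y hy
    by_cases h : ∃ z, z ∈ D ∧ ∃ E ∈ X, E ⊆ y ∧ E ⊆ z
    · have hσ : σ y = κ h.choose := dif_pos h
      rw [hσ]
      exact hκ _ (hD h.choose_spec.1)
    · have hσ : σ y = κ y := dif_neg h
      rw [hσ]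
      exact hκ _ hy
  · intro x hx E hE hEx
    refine ⟨hEx, fun y hy hEy => ?_⟩
    rw [hag x hx]
    exact key y hy x hx E hE hEy hEx
end
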